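/- Let G be a finite simple connected graph. Then (i) for every vertex v ∈ V(G), d₂(v|R(G)) ≥ 2·d₂(v|G), and equality holds for all v ∈ V(G) if and only if G is {C₃,C₄}-free; and (ii) for every edge e ∈ E(G) (viewed as the corresponding new vertex of R(G) and as a vertex of L(G)), d₂(e|R(G)) ≤ 2·d₁(e|L(G)), and equality holds for all e ∈ E(G) if and only if G is C₃-free. -/

import Mathlib

/-!
In `R(G)`, an original vertex `v` is at distance two from an original vertex `w` iff it is so in
`G` (a common neighbour `e ∈ E(G)` forces `v` and `w` to be the two ends of `e`), and at distance
two from an edge `f` iff `v ∉ f` and `f` has an end adjacent to `v`. So claim (i) compares the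
vertices at distance two from `v` in `G` with such edges. Likewise an edge `e` is at distance two
from its neighbours in `L(G)`, and from the vertices `w ∉ e` adjacent to an end of `e`, so claim
(ii) compares these vertices with the `L(G)`-neighbours of `e`.

Both comparisons use the incidence relation `w ∈ f`. Each vertex `w` counted lies on some edge `f`
counted, and no edge counted contains two of the vertices counted, so there are at most as many
vertices as edges, with equality iff incidence is a bijection (`card_le_of_rel`,
`card_eq_iff_of_rel`). In (i), an edge counted with no vertex counted on it closes a triangle at
`v`, and a vertex on two edges counted gives a triangle or an induced 4-cycle through `v`. In (ii),
every edge counted has a vertex counted on it, and a vertex on two edges counted forms a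
triangle with `e`.
-/

/-!
Definitions for the leap eccentric connectivity index of graph operations with
subdivided edges (Song–Tang).
-/

open SimpleGraph Finset
open scoped Classical

noncomputable section

instance edgeSetFintypeOfFintype {V : Type*} [Fintype V] (G : SimpleGraph V) :
    Fintype G.edgeSet :=
  Set.Finite.fintype (Set.toFinite _)

/-- Eccentricity `e(v|X)` of a vertex: the maximum distance from `v` to a vertex of `X`. -/
def ecc {V : Type*} [Fintype V] (X : SimpleGraph V) (v : V) : ℕ :=
  Finset.univ.sup (fun u => X.dist v u)

/-- `d₁(v|X)`: the degree of `v`. -/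
def deg1 {V : Type*} [Fintype V] (X : SimpleGraph V) (v : V) : ℕ :=
  (Finset.univ.filter (fun u => X.Adj v u)).card

/-- `d₂(v|X)`: the second degree of `v`, the number of vertices at distance exactly 2. -/
def deg2 {V : Type*} [Fintype V] (X : SimpleGraph V) (v : V) : ℕ :=
  (Finset.univ.filter (fun u => X.dist v u = 2)).card

/-- The leap eccentric connectivity index `Lξᶜ(X) = Σ_v d₂(v|X)·e(v|X)`. -/
def leapECI {V : Type*} [Fintype V] (X : SimpleGraph V) : ℕ :=
  ∑ v, deg2 X v * ecc X v

/-- The eccentric connectivity index `ξᶜ(X) = Σ_v d₁(v|X)·e(v|X)`. -/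
def eci {V : Type*} [Fintype V] (X : SimpleGraph V) : ℕ :=
  ∑ v, deg1 X v * ecc X v

/-- The first Zagreb index `M₁(X) = Σ_v d₁(v|X)²`. -/
def zagrebM1 {V : Type*} [Fintype V] (X : SimpleGraph V) : ℕ :=
  ∑ v, (deg1 X v) ^ 2

/-- The total eccentricity `θ(X) = Σ_v e(v|X)`. -/
def totalEcc {V : Type*} [Fintype V] (X : SimpleGraph V) : ℕ :=
  ∑ v, ecc X v

/-- The number of edges `|E(X)|`. -/
def numEdges {V : Type*} (X : SimpleGraph V) : ℕ := X.edgeSet.ncard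

/-- The line graph `L(G)`, with vertex set `E(G)`: two edges of `G` are adjacent in
`L(G)` iff they are distinct and share an endpoint. -/
def lineG {V : Type*} (G : SimpleGraph V) : SimpleGraph G.edgeSet :=
  SimpleGraph.fromRel (fun e f => ∃ v, v ∈ (e : Sym2 V) ∧ v ∈ (f : Sym2 V))

/-- The subdivision graph `S(G)`, with vertex set `V(G) ⊕ E(G)`:
`v ∈ V(G)` is adjacent to `e ∈ E(G)` iff `v` is an endpoint of `e`; no other edges. -/
def subdivG {V : Type*} (G : SimpleGraph V) : SimpleGraph (V ⊕ G.edgeSet) :=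
  SimpleGraph.fromRel (fun a b => match a, b with
    | Sum.inl v, Sum.inr e => v ∈ (e : Sym2 V)
    | _, _ => False)

/-- The graph `Q(G)`, with vertex set `V(G) ⊕ E(G)`: `v ∈ V(G)` is adjacent to
`e ∈ E(G)` iff `v` is an endpoint of `e`, and distinct `e, e' ∈ E(G)` are adjacent
iff the corresponding edges share an endpoint in `G`. -/
def qGraph {V : Type*} (G : SimpleGraph V) : SimpleGraph (V ⊕ G.edgeSet) :=
  SimpleGraph.fromRel (fun a b => match a, b with
    | Sum.inl v, Sum.inr e => v ∈ (e : Sym2 V)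
    | Sum.inr e, Sum.inr f => ∃ v, v ∈ (e : Sym2 V) ∧ v ∈ (f : Sym2 V)
    | _, _ => False)

/-- The graph `R(G)`, with vertex set `V(G) ⊕ E(G)`: `v, v' ∈ V(G)` are adjacent iff
they are adjacent in `G`, and `v ∈ V(G)` is adjacent to `e ∈ E(G)` iff `v` is an
endpoint of `e`. -/
def rGraph {V : Type*} (G : SimpleGraph V) : SimpleGraph (V ⊕ G.edgeSet) :=
  SimpleGraph.fromRel (fun a b => match a, b with
    | Sum.inl v, Sum.inl w => G.Adj v w
    | Sum.inl v, Sum.inr e => v ∈ (e : Sym2 V)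
    | _, _ => False)

/-- The total graph `T(G)`, with vertex set `V(G) ⊕ E(G)`: adjacency holds iff the
corresponding elements of `G` are adjacent or incident. -/
def tGraph {V : Type*} (G : SimpleGraph V) : SimpleGraph (V ⊕ G.edgeSet) :=
  SimpleGraph.fromRel (fun a b => match a, b with
    | Sum.inl v, Sum.inl w => G.Adj v w
    | Sum.inl v, Sum.inr e => v ∈ (e : Sym2 V)
    | Sum.inr e, Sum.inr f => ∃ v, v ∈ (e : Sym2 V) ∧ v ∈ (f : Sym2 V)
    | _, _ => False)

/-- `G` is `F`-free: no induced subgraph of `G` is isomorphic to `F`. -/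
def fFree {W V : Type*} (F : SimpleGraph W) (G : SimpleGraph V) : Prop :=
  ∀ s : Set V, IsEmpty (F ≃g G.induce s)

/-- The subdivision vertex join `G ∨̇ H`: the disjoint union of `S(G)` and `H`,
joining every original vertex of `G` to every vertex of `H`. -/
def svJoin {V W : Type*} (G : SimpleGraph V) (H : SimpleGraph W) :
    SimpleGraph ((V ⊕ G.edgeSet) ⊕ W) :=
  SimpleGraph.fromRel (fun a b => match a, b with
    | Sum.inl x, Sum.inl y => (subdivG G).Adj x y
    | Sum.inl (Sum.inl _), Sum.inr _ => True
    | Sum.inr w, Sum.inr w' => H.Adj w w'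
    | _, _ => False)

/-- The subdivision edge join `G ⊻ H`: the disjoint union of `S(G)` and `H`,
joining every subdivision vertex to every vertex of `H`. -/
def seJoin {V W : Type*} (G : SimpleGraph V) (H : SimpleGraph W) :
    SimpleGraph ((V ⊕ G.edgeSet) ⊕ W) :=
  SimpleGraph.fromRel (fun a b => match a, b with
    | Sum.inl x, Sum.inl y => (subdivG G).Adj x y
    | Sum.inl (Sum.inr _), Sum.inr _ => True
    | Sum.inr w, Sum.inr w' => H.Adj w w'
    | _, _ => False)

/-- The subdivision vertex edge join `G^S △ (H₁^V ∨ H₂^S)`: the disjoint union of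
`S(G)`, `H₁` and `H₂`, joining every original vertex of `G` to every vertex of `H₁`
and every subdivision vertex to every vertex of `H₂`. -/
def sveJoin {V W₁ W₂ : Type*} (G : SimpleGraph V) (H₁ : SimpleGraph W₁)
    (H₂ : SimpleGraph W₂) : SimpleGraph ((V ⊕ G.edgeSet) ⊕ (W₁ ⊕ W₂)) :=
  SimpleGraph.fromRel (fun a b => match a, b with
    | Sum.inl x, Sum.inl y => (subdivG G).Adj x y
    | Sum.inl (Sum.inl _), Sum.inr (Sum.inl _) => True
    | Sum.inl (Sum.inr _), Sum.inr (Sum.inr _) => True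
    | Sum.inr (Sum.inl w), Sum.inr (Sum.inl w') => H₁.Adj w w'
    | Sum.inr (Sum.inr w), Sum.inr (Sum.inr w') => H₂.Adj w w'
    | _, _ => False)

/-- The double corona of a base graph `B` on `A ⊕ E'` with the graphs `H₁, H₂`:
one copy of `H₁` for each `A`-vertex, joined to it, and one copy of `H₂` for each
`E'`-vertex, joined to it. -/
def doubleCorona {A E' W₁ W₂ : Type*} (B : SimpleGraph (A ⊕ E')) (H₁ : SimpleGraph W₁)
    (H₂ : SimpleGraph W₂) : SimpleGraph ((A ⊕ E') ⊕ (A × W₁ ⊕ E' × W₂)) :=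
  SimpleGraph.fromRel (fun a b => match a, b with
    | Sum.inl x, Sum.inl y => B.Adj x y
    | Sum.inl (Sum.inl v), Sum.inr (Sum.inl p) => v = p.1
    | Sum.inl (Sum.inr e), Sum.inr (Sum.inr p) => e = p.1
    | Sum.inr (Sum.inl p), Sum.inr (Sum.inl q) => p.1 = q.1 ∧ H₁.Adj p.2 q.2
    | Sum.inr (Sum.inr p), Sum.inr (Sum.inr q) => p.1 = q.1 ∧ H₂.Adj p.2 q.2
    | _, _ => False)

/-! ### Counting along a relation -/

/-- If every `a ∈ A` is related to some `b ∈ B` and no `b ∈ B` is related to two elements of `A`,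
then `A` is at most as large as `B`. -/
lemma card_le_of_rel {α β : Type*} {A : Finset α} {B : Finset β} {r : α → β → Prop}
    (h1 : ∀ a ∈ A, ∃ b ∈ B, r a b)
    (h2 : ∀ b ∈ B, ∀ a ∈ A, ∀ a' ∈ A, r a b → r a' b → a = a') : A.card ≤ B.card := by
  exact Finset.card_le_card_of_forall_subsingleton r h1
    fun b hb a ha c hc => h2 b hb a ha.1 c hc.1 ha.2 hc.2

/-- The equality case of `card_le_of_rel`: `A` and `B` are equinumerous iff the relation between
them is a bijection. -/
lemma card_eq_iff_of_rel {α β : Type*} {A : Finset α} {B : Finset β} {r : α → β → Prop}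
    (h1 : ∀ a ∈ A, ∃ b ∈ B, r a b)
    (h2 : ∀ b ∈ B, ∀ a ∈ A, ∀ a' ∈ A, r a b → r a' b → a = a') :
    B.card = A.card ↔ (∀ b ∈ B, ∃ a ∈ A, r a b) ∧
      ∀ a ∈ A, ∀ b ∈ B, ∀ b' ∈ B, r a b → r a b' → b = b' := by
  constructor
  · intro h
    rcases isEmpty_or_nonempty β with hβ | hβ
    · exact ⟨fun b => isEmptyElim b, fun a _ b => isEmptyElim b⟩
    choose! f hf hr using h1
    have hinj : Set.InjOn f A := fun a ha a' ha' h =>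
      h2 _ (hf a ha) a ha a' ha' (hr a ha) (h ▸ hr a' ha')
    have hsurj : ∀ b ∈ B, ∃ a ∈ A, f a = b := fun b hb =>
      Finset.surjOn_of_injOn_of_card_le f (fun a ha => hf a ha) hinj h.le hb
    refine ⟨fun b hb => ?_, fun a ha b hb b' hb' hab hab' => ?_⟩
    · obtain ⟨a, ha, rfl⟩ := hsurj b hb
      exact ⟨a, ha, hr a ha⟩
    · obtain ⟨c, hc, rfl⟩ := hsurj b hb
      obtain ⟨c', hc', rfl⟩ := hsurj b' hb'
      rw [← h2 _ hb a ha c hc hab (hr c hc), ← h2 _ hb' a ha c' hc' hab' (hr c' hc')]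
  · rintro ⟨h3, h4⟩
    exact le_antisymm (card_le_of_rel (r := fun b a => r a b) h3 h4) (card_le_of_rel h1 h2)

lemma card_filter_sum_type {α β : Type*} [Fintype α] [Fintype β] (p : α ⊕ β → Prop)
    [DecidablePred p] :
    (Finset.univ.filter p).card = (Finset.univ.filter fun a => p (Sum.inl a)).card +
      (Finset.univ.filter fun b => p (Sum.inr b)).card := by
  simp only [Finset.card_filter, Fintype.sum_sum_type]

/-! ### Induced cycles of length three and four -/

lemma fFree_iff_isEmpty_embedding {W V : Type*} (F : SimpleGraph W) (G : SimpleGraph V) :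
    fFree F G ↔ IsEmpty (F ↪g G) := by
  refine ⟨fun h => ⟨fun f => (h _).false f.isoInduceRange⟩, fun h s => ⟨fun f => ?_⟩⟩
  exact h.false ((SimpleGraph.Embedding.induce s).comp f.toEmbedding)

lemma fFree_three_iff {V : Type*} (G : SimpleGraph V) :
    fFree (SimpleGraph.cycleGraph 3) G ↔ ∀ a b c, G.Adj a b → G.Adj b c → ¬ G.Adj a c := by
  rw [fFree_iff_isEmpty_embedding]
  constructor
  · intro h a b c hab hbc hac
    refine h.false ⟨⟨![a, b, c], ?_⟩, ?_⟩
    · intro i j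
      have := hab.ne; have := hbc.ne; have := hac.ne
      have := hab.ne'; have := hbc.ne'; have := hac.ne'
      fin_cases i <;> fin_cases j <;> simp_all
    · intro i j
      have := hab.symm; have := hbc.symm; have := hac.symm
      change G.Adj (![a, b, c] i) (![a, b, c] j) ↔ _
      rw [SimpleGraph.cycleGraph_three_eq_top]
      fin_cases i <;> fin_cases j <;> simp_all
  · refine fun h => ⟨fun f => ?_⟩
    have key : ∀ i j : Fin 3, i ≠ j → G.Adj (f i) (f j) := fun i j hij =>
      f.map_rel_iff.2 (by rw [SimpleGraph.cycleGraph_three_eq_top]; exact hij)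
    exact h _ _ _ (key 0 1 (by decide)) (key 1 2 (by decide)) (key 0 2 (by decide))

lemma fFree_four_iff {V : Type*} (G : SimpleGraph V) :
    fFree (SimpleGraph.cycleGraph 4) G ↔ ∀ a b c d, G.Adj a b → G.Adj b c → G.Adj c d →
      G.Adj d a → a ≠ c → b ≠ d → ¬ G.Adj a c → G.Adj b d := by
  rw [fFree_iff_isEmpty_embedding]
  constructor
  · intro h a b c d hab hbc hcd hda hac hbd nac
    by_contra nbd
    refine h.false ⟨⟨![a, b, c, d], ?_⟩, ?_⟩
    · intro i j
      have := hab.ne; have := hbc.ne; have := hcd.ne; have := hda.ne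
      have := hab.ne'; have := hbc.ne'; have := hcd.ne'; have := hda.ne'
      have := hac.symm; have := hbd.symm
      fin_cases i <;> fin_cases j <;> simp_all
    · intro i j
      have := hab.symm; have := hbc.symm; have := hcd.symm; have := hda.symm
      have nca : ¬ G.Adj c a := fun h => nac h.symm
      have ndb : ¬ G.Adj d b := fun h => nbd h.symm
      change G.Adj (![a, b, c, d] i) (![a, b, c, d] j) ↔ _
      rw [SimpleGraph.cycleGraph_adj]
      fin_cases i <;> fin_cases j <;> simp_all <;> decide
  · refine fun h => ⟨fun f => ?_⟩
    have key : ∀ i j : Fin 4, (i - j = 1 ∨ j - i = 1) ↔ G.Adj (f i) (f j) := fun i j => by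
      rw [← SimpleGraph.cycleGraph_adj]; exact f.map_rel_iff.symm
    have h13 := h _ _ _ _ ((key 0 1).1 (by decide)) ((key 1 2).1 (by decide))
      ((key 2 3).1 (by decide)) ((key 3 0).1 (by decide))
      (f.injective.ne (by decide)) (f.injective.ne (by decide)) ((key 0 2).not.1 (by decide))
    exact (key 1 3).not.1 (by decide) h13

/-! ### Distance two in `R(G)` -/

lemma dist_eq_two_iff' {V : Type*} (X : SimpleGraph V) (u v : V) :
    X.dist u v = 2 ↔ u ≠ v ∧ ¬ X.Adj u v ∧ ∃ c, X.Adj u c ∧ X.Adj c v := by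
  have h : X.dist u v = 2 ↔ X.edist u v = 2 := by
    rw [SimpleGraph.dist, ENat.toNat_eq_iff two_ne_zero]; rfl
  rw [h, SimpleGraph.edist_eq_two_iff]
  simp only [Set.Nonempty, SimpleGraph.mem_commonNeighbors, SimpleGraph.adj_comm X v]

section Adjacency

variable {V : Type*} (G : SimpleGraph V)

@[simp] lemma rGraph_adj_inl_inl (v w : V) :
    (rGraph G).Adj (Sum.inl v) (Sum.inl w) ↔ G.Adj v w := by
  simp only [rGraph, SimpleGraph.fromRel_adj, ne_eq, Sum.inl.injEq, G.adj_comm w v, or_self]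
  exact ⟨fun h => h.2, fun h => ⟨h.ne, h⟩⟩

@[simp] lemma rGraph_adj_inl_inr (v : V) (e : G.edgeSet) :
    (rGraph G).Adj (Sum.inl v) (Sum.inr e) ↔ v ∈ (e : Sym2 V) := by
  simp [rGraph]

@[simp] lemma rGraph_adj_inr_inl (v : V) (e : G.edgeSet) :
    (rGraph G).Adj (Sum.inr e) (Sum.inl v) ↔ v ∈ (e : Sym2 V) := by
  simp [rGraph]

@[simp] lemma rGraph_adj_inr_inr (e f : G.edgeSet) :
    ¬ (rGraph G).Adj (Sum.inr e) (Sum.inr f) := by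
  simp [rGraph]

lemma lineG_adj (e f : G.edgeSet) :
    (lineG G).Adj e f ↔ e ≠ f ∧ ∃ v, v ∈ (e : Sym2 V) ∧ v ∈ (f : Sym2 V) := by
  simp only [lineG, SimpleGraph.fromRel_adj]
  grind

variable {G} in
lemma adj_of_mem_edge {e : G.edgeSet} {v w : V} (hv : v ∈ (e : Sym2 V)) (hw : w ∈ (e : Sym2 V))
    (h : v ≠ w) : G.Adj v w := by
  rw [← SimpleGraph.mem_edgeSet, ← (Sym2.mem_and_mem_iff h).1 ⟨hv, hw⟩]
  exact e.2

variable {G} in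
lemma edge_ext {e f : G.edgeSet} {v w : V} (h : v ≠ w) (hv : v ∈ (e : Sym2 V))
    (hw : w ∈ (e : Sym2 V)) (hv' : v ∈ (f : Sym2 V)) (hw' : w ∈ (f : Sym2 V)) : e = f :=
  Subtype.ext (((Sym2.mem_and_mem_iff h).1 ⟨hv, hw⟩).trans
    ((Sym2.mem_and_mem_iff h).1 ⟨hv', hw'⟩).symm)

variable {G} in
lemma exists_other (e : G.edgeSet) {v : V} (hv : v ∈ (e : Sym2 V)) :
    ∃ w ∈ (e : Sym2 V), v ≠ w := by
  obtain ⟨w, hw⟩ := hv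
  have he := e.2
  rw [hw, SimpleGraph.mem_edgeSet] at he
  exact ⟨w, by rw [hw]; exact Sym2.mem_mk_right v w, he.ne⟩

variable {G} in
/-- An edge has only two ends. -/
lemma eq_of_mem_edge {e : G.edgeSet} {u v w : V} (hu : u ∈ (e : Sym2 V)) (hv : v ∈ (e : Sym2 V))
    (hw : w ∈ (e : Sym2 V)) (huv : u ≠ v) (huw : u ≠ w) : v = w := by
  rw [(Sym2.mem_and_mem_iff huv).1 ⟨hu, hv⟩, Sym2.mem_iff] at hw
  grind

lemma rGraph_dist_inl_inl (v w : V) :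
    (rGraph G).dist (Sum.inl v) (Sum.inl w) = 2 ↔ G.dist v w = 2 := by
  simp only [dist_eq_two_iff', Sum.exists, rGraph_adj_inl_inl, rGraph_adj_inl_inr,
    rGraph_adj_inr_inl, ne_eq, Sum.inl.injEq]
  constructor
  · rintro ⟨h1, h2, h3 | ⟨e, hv, hw⟩⟩
    · exact ⟨h1, h2, h3⟩
    · exact absurd (adj_of_mem_edge hv hw h1) h2
  · rintro ⟨h1, h2, h3⟩
    exact ⟨h1, h2, Or.inl h3⟩

lemma rGraph_dist_inl_inr (v : V) (e : G.edgeSet) :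
    (rGraph G).dist (Sum.inl v) (Sum.inr e) = 2 ↔
      v ∉ (e : Sym2 V) ∧ ∃ u ∈ (e : Sym2 V), G.Adj v u := by
  simp [dist_eq_two_iff', and_comm]

lemma rGraph_dist_inr_inl (v : V) (e : G.edgeSet) :
    (rGraph G).dist (Sum.inr e) (Sum.inl v) = 2 ↔
      v ∉ (e : Sym2 V) ∧ ∃ u ∈ (e : Sym2 V), G.Adj v u := by
  rw [SimpleGraph.dist_comm, rGraph_dist_inl_inr]

lemma rGraph_dist_inr_inr (e f : G.edgeSet) :
    (rGraph G).dist (Sum.inr e) (Sum.inr f) = 2 ↔ (lineG G).Adj e f := by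
  simp [dist_eq_two_iff', lineG_adj]

end Adjacency

/-! ### The two comparisons -/

section Comparison

variable {V : Type*} [Fintype V] (G : SimpleGraph V)

/-- The edges of `G` at distance two from the original vertex `v` in `R(G)`. -/
def farEdges (v : V) : Finset G.edgeSet :=
  Finset.univ.filter fun f => v ∉ (f : Sym2 V) ∧ ∃ u ∈ (f : Sym2 V), G.Adj v u

/-- The vertices of `G` at distance two from the edge `e` in `R(G)`. -/
def farVerts (e : G.edgeSet) : Finset V :=
  Finset.univ.filter fun w => w ∉ (e : Sym2 V) ∧ ∃ u ∈ (e : Sym2 V), G.Adj w u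

lemma deg2_rGraph_inl (v : V) :
    deg2 (rGraph G) (Sum.inl v) = deg2 G v + (farEdges G v).card := by
  rw [deg2, card_filter_sum_type]
  simp only [deg2, rGraph_dist_inl_inl, rGraph_dist_inl_inr, farEdges]

lemma deg2_rGraph_inr (e : G.edgeSet) :
    deg2 (rGraph G) (Sum.inr e) = (farVerts G e).card + deg1 (lineG G) e := by
  rw [deg2, card_filter_sum_type]
  simp only [deg1, rGraph_dist_inr_inl, rGraph_dist_inr_inr, farVerts]

lemma mem_farEdges {v : V} {f : G.edgeSet} :
    f ∈ farEdges G v ↔ v ∉ (f : Sym2 V) ∧ ∃ u ∈ (f : Sym2 V), G.Adj v u := by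
  simp [farEdges]

lemma mem_farVerts {e : G.edgeSet} {w : V} :
    w ∈ farVerts G e ↔ w ∉ (e : Sym2 V) ∧ ∃ u ∈ (e : Sym2 V), G.Adj w u := by
  simp [farVerts]

lemma mem_dist_two {v w : V} : w ∈ Finset.univ.filter (fun u => G.dist v u = 2) ↔
    v ≠ w ∧ ¬ G.Adj v w ∧ ∃ c, G.Adj v c ∧ G.Adj c w := by
  simp [dist_eq_two_iff']

lemma mem_lineG_nbr {e f : G.edgeSet} : f ∈ Finset.univ.filter (fun f => (lineG G).Adj e f) ↔
    e ≠ f ∧ ∃ v, v ∈ (e : Sym2 V) ∧ v ∈ (f : Sym2 V) := by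
  simp [lineG_adj]

lemma exists_farEdge (v : V) : ∀ w ∈ Finset.univ.filter (fun u => G.dist v u = 2),
    ∃ f ∈ farEdges G v, w ∈ (f : Sym2 V) := by
  intro w hw
  obtain ⟨h1, h2, c, hvc, hcw⟩ := (mem_dist_two G).1 hw
  refine ⟨⟨s(c, w), hcw⟩, (mem_farEdges G).2 ⟨?_, c, ?_, hvc⟩, Sym2.mem_mk_right c w⟩
  · simp [hvc.ne, h1]
  · simp

/-- An edge with an end adjacent to `v` has at most one end at distance two from `v`. -/
lemma farEdge_unique (v : V) : ∀ f ∈ farEdges G v,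
    ∀ w ∈ Finset.univ.filter (fun u => G.dist v u = 2),
    ∀ w' ∈ Finset.univ.filter (fun u => G.dist v u = 2),
      w ∈ (f : Sym2 V) → w' ∈ (f : Sym2 V) → w = w' := by
  intro f hf w hw w' hw' hwf hwf'
  obtain ⟨-, u, hu, hvu⟩ := (mem_farEdges G).1 hf
  have h := ((mem_dist_two G).1 hw).2.1
  have h' := ((mem_dist_two G).1 hw').2.1
  exact eq_of_mem_edge hu hwf hwf' (fun e => h (e ▸ hvu)) (fun e => h' (e ▸ hvu))

lemma exists_lineG_nbr (e : G.edgeSet) : ∀ w ∈ farVerts G e,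
    ∃ f ∈ Finset.univ.filter (fun f => (lineG G).Adj e f), w ∈ (f : Sym2 V) := by
  intro w hw
  obtain ⟨hwe, u, hu, hwu⟩ := (mem_farVerts G).1 hw
  refine ⟨⟨s(w, u), hwu⟩, (mem_lineG_nbr G).2 ⟨?_, u, hu, Sym2.mem_mk_right w u⟩,
    Sym2.mem_mk_left w u⟩
  rintro rfl
  exact hwe (Sym2.mem_mk_left w u)

/-- An edge sharing an end with `e` has at most one end off `e`. -/
lemma lineG_nbr_unique (e : G.edgeSet) :
    ∀ f ∈ Finset.univ.filter (fun f => (lineG G).Adj e f), ∀ w ∈ farVerts G e,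
    ∀ w' ∈ farVerts G e, w ∈ (f : Sym2 V) → w' ∈ (f : Sym2 V) → w = w' := by
  intro f hf w hw w' hw' hwf hwf'
  obtain ⟨-, u, hue, huf⟩ := (mem_lineG_nbr G).1 hf
  have h := ((mem_farVerts G).1 hw).1
  have h' := ((mem_farVerts G).1 hw').1
  exact eq_of_mem_edge huf hwf hwf' (fun e => h (e ▸ hue)) (fun e => h' (e ▸ hue))

lemma deg2_le_card_farEdges (v : V) : deg2 G v ≤ (farEdges G v).card :=
  card_le_of_rel (exists_farEdge G v) (farEdge_unique G v)

lemma card_farVerts_le_deg1 (e : G.edgeSet) : (farVerts G e).card ≤ deg1 (lineG G) e :=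
  card_le_of_rel (exists_lineG_nbr G e) (lineG_nbr_unique G e)

lemma card_farEdges_eq_iff :
    (∀ v, (farEdges G v).card = deg2 G v) ↔
      (fFree (SimpleGraph.cycleGraph 3) G ∧ fFree (SimpleGraph.cycleGraph 4) G) := by
  have key := fun v => card_eq_iff_of_rel (exists_farEdge G v) (farEdge_unique G v)
  rw [fFree_three_iff, fFree_four_iff]
  constructor
  · refine fun h => ⟨fun a b c hab hbc hac => ?_, fun a b c d hab hbc hcd hda hac hbd nac => ?_⟩
    · -- the edge `bc` lies in `farEdges G a` but both its ends are adjacent to `a`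
      obtain ⟨w, hw, hwf⟩ := ((key a).1 (h a)).1 ⟨s(b, c), hbc⟩
        ((mem_farEdges G).2 ⟨by simp [hab.ne, hac.ne], b, by simp, hab⟩)
      have hn := ((mem_dist_two G).1 hw).2.1
      rcases Sym2.mem_iff.1 hwf with rfl | rfl
      · exact hn hab
      · exact hn hac
    · -- `c` is at distance two from `a` and lies on the two edges `bc` and `dc` of `farEdges G a`
      have hc : c ∈ Finset.univ.filter (fun u => G.dist a u = 2) :=
        (mem_dist_two G).2 ⟨hac, nac, b, hab, hbc⟩
      have heq := ((key a).1 (h a)).2 c hc ⟨s(b, c), hbc⟩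
        ((mem_farEdges G).2 ⟨by simp [hab.ne, hac], b, by simp, hab⟩) ⟨s(d, c), hcd.symm⟩
        ((mem_farEdges G).2 ⟨by simp [hda.ne', hac], d, by simp, hda.symm⟩) (by simp) (by simp)
      exact absurd (Sym2.congr_left.1 (Subtype.ext_iff.1 heq)) hbd
  · rintro ⟨h3, h4⟩ v
    refine (key v).2 ⟨fun f hf => ?_, fun w hw f hf f' hf' hwf hwf' => ?_⟩
    · obtain ⟨hvf, u, hu, hvu⟩ := (mem_farEdges G).1 hf
      obtain ⟨w, hw, huw⟩ := exists_other f hu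
      have huw' := adj_of_mem_edge hu hw huw
      exact ⟨w, (mem_dist_two G).2 ⟨fun e => hvf (e ▸ hw), h3 v u w hvu huw', u, hvu, huw'⟩, hw⟩
    · obtain ⟨hvw, nvw, -⟩ := (mem_dist_two G).1 hw
      obtain ⟨-, u, hu, hvu⟩ := (mem_farEdges G).1 hf
      obtain ⟨-, u', hu', hvu'⟩ := (mem_farEdges G).1 hf'
      have huw : u ≠ w := fun e => nvw (e ▸ hvu)
      have huw' : u' ≠ w := fun e => nvw (e ▸ hvu')
      have h1 := adj_of_mem_edge hu hwf huw
      have h2 := adj_of_mem_edge hu' hwf' huw'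
      by_cases hne : u = u'
      · subst hne
        exact edge_ext huw hu hwf hu' hwf'
      · exact absurd hvu' (h3 v u u' hvu (h4 v u w u' hvu h1 h2.symm hvu'.symm hvw hne nvw))

lemma deg1_eq_card_farVerts_iff :
    (∀ e, deg1 (lineG G) e = (farVerts G e).card) ↔ fFree (SimpleGraph.cycleGraph 3) G := by
  have key := fun e => card_eq_iff_of_rel (exists_lineG_nbr G e) (lineG_nbr_unique G e)
  rw [fFree_three_iff]
  constructor
  · intro h a b c hab hbc hac
    -- `c` is off the edge `ab` but lies on its two `L(G)`-neighbours `ac` and `bc`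
    have hc : c ∈ farVerts G ⟨s(a, b), hab⟩ :=
      (mem_farVerts G).2 ⟨by simp [hac.ne', hbc.ne'], a, by simp, hac.symm⟩
    have heq := ((key ⟨s(a, b), hab⟩).1 (h _)).2 c hc ⟨s(a, c), hac⟩
      ((mem_lineG_nbr G).2 ⟨fun e => hbc.ne (Sym2.congr_right.1 (Subtype.ext_iff.1 e)), a,
        by simp, by simp⟩) ⟨s(b, c), hbc⟩
      ((mem_lineG_nbr G).2 ⟨fun e => hac.ne (Sym2.congr_right.1
        (Sym2.eq_swap.trans (Subtype.ext_iff.1 e))), b, by simp, by simp⟩) (by simp) (by simp)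
    exact hab.ne (Sym2.congr_left.1 (Subtype.ext_iff.1 heq))
  · intro h3 e
    refine (key e).2 ⟨fun f hf => ?_, fun w hw f hf f' hf' hwf hwf' => ?_⟩
    · obtain ⟨hef, u, hue, huf⟩ := (mem_lineG_nbr G).1 hf
      obtain ⟨w, hw, huw⟩ := exists_other f huf
      exact ⟨w, (mem_farVerts G).2 ⟨fun hwe => hef (edge_ext huw hue hwe huf hw), u, hue,
        adj_of_mem_edge hw huf huw.symm⟩, hw⟩
    · have hwe := ((mem_farVerts G).1 hw).1
      obtain ⟨-, u, hue, huf⟩ := (mem_lineG_nbr G).1 hf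
      obtain ⟨-, u', hue', huf'⟩ := (mem_lineG_nbr G).1 hf'
      have hwu : w ≠ u := fun h => hwe (h ▸ hue)
      have hwu' : w ≠ u' := fun h => hwe (h ▸ hue')
      by_cases hne : u = u'
      · subst hne
        exact edge_ext hwu hwf huf hwf' huf'
      · exact absurd (adj_of_mem_edge hwf' huf' hwu')
          (h3 w u u' (adj_of_mem_edge hwf huf hwu) (adj_of_mem_edge hue hue' hne))

end Comparison

theorem rGraph_deg2 {V : Type*} [Fintype V] (G : SimpleGraph V)
    (hconn : G.Connected) :
    (∀ v : V, 2 * deg2 G v ≤ deg2 (rGraph G) (Sum.inl v)) ∧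
    ((∀ v : V, deg2 (rGraph G) (Sum.inl v) = 2 * deg2 G v) ↔
      (fFree (SimpleGraph.cycleGraph 3) G ∧ fFree (SimpleGraph.cycleGraph 4) G)) ∧
    (∀ e : G.edgeSet, deg2 (rGraph G) (Sum.inr e) ≤ 2 * deg1 (lineG G) e) ∧
    ((∀ e : G.edgeSet, deg2 (rGraph G) (Sum.inr e) = 2 * deg1 (lineG G) e) ↔
      fFree (SimpleGraph.cycleGraph 3) G) := by
  simp only [deg2_rGraph_inl, deg2_rGraph_inr, two_mul, Nat.add_left_cancel_iff,
    Nat.add_right_cancel_iff, Nat.add_le_add_iff_left, Nat.add_le_add_iff_right]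
  exact ⟨deg2_le_card_farEdges G, card_farEdges_eq_iff G, card_farVerts_le_deg1 G, by
    rw [← deg1_eq_card_farVerts_iff G]; exact forall_congr' fun e => eq_comm⟩
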